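/- Fix d ≥ 1, H = 2^d, and s ≥ 1. Consider two doubling walks h and h' on ℤ/Hℤ (h_{t+1} = 2·h_t + b_t mod H) with independent uniformly random starting points and independent uniform bit sequences, and let N = #{t ∈ {1,…,s} : h_t = h'_t} be the number of collisions during the first s steps. Then E[N] = s/H, E[N | N > 0] < 2 + s/H, and consequently Pr[N > 0] > s/(2H + s). -/

import Mathlib

/-- The doubling walk on `ℤ/Hℤ`: `h_0 = h0` and `h_{t+1} = 2·h_t + b_t (mod H)`,
where `b` is the sequence of driving bits. -/
def dwalk (H : ℕ) (h0 : ZMod H) (b : ℕ → Bool) : ℕ → ZMod H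
  | 0 => h0
  | t + 1 => 2 * dwalk H h0 b t + (if b t then 1 else 0)

/-- Extend a finite bit string to an infinite one (by `false`); the walk up to
time `t` only depends on the first `t` bits. -/
def extBits {t : ℕ} (b : Fin t → Bool) : ℕ → Bool :=
  fun i => if h : i < t then b ⟨i, h⟩ else false

def bz (H : ℕ) (a : Bool) : ZMod H := if a then 1 else 0

def cnt (H n : ℕ) (x y : ZMod H) (b b' : Fin n → Bool) : ℕ :=
  ∑ t : Fin n, if dwalk H x (extBits b) (t.1 + 1) = dwalk H y (extBits b') (t.1 + 1) then 1 else 0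

lemma extBits_cons_zero {n : ℕ} (a : Bool) (b : Fin n → Bool) :
    extBits (Fin.cons a b : Fin (n+1) → Bool) 0 = a := by
  simp [extBits]

lemma extBits_cons_succ {n : ℕ} (a : Bool) (b : Fin n → Bool) (t : ℕ) :
    extBits (Fin.cons a b : Fin (n+1) → Bool) (t+1) = extBits b t := by
  unfold extBits
  by_cases h : t < n
  · have h' : t + 1 < n + 1 := by omega
    rw [dif_pos h, dif_pos h']
    exact Fin.cons_succ (α := fun _ => Bool) a b ⟨t, h⟩
  · have h' : ¬ t + 1 < n + 1 := by omega
    rw [dif_neg h, dif_neg h']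

lemma dwalk_cons (H : ℕ) {n : ℕ} (x : ZMod H) (a : Bool) (b : Fin n → Bool) (t : ℕ) :
    dwalk H x (extBits (Fin.cons a b : Fin (n+1) → Bool)) (t+1)
      = dwalk H (2 * x + bz H a) (extBits b) t := by
  induction t with
  | zero => simp [dwalk, extBits_cons_zero, bz]
  | succ t ih => rw [dwalk, ih, extBits_cons_succ, dwalk]

lemma cnt_cons (H n : ℕ) (x y : ZMod H) (a a' : Bool) (b b' : Fin n → Bool) :
    cnt H (n+1) x y (Fin.cons a b : Fin (n+1) → Bool) (Fin.cons a' b' : Fin (n+1) → Bool)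
      = (if 2 * x + bz H a = 2 * y + bz H a' then 1 else 0)
        + cnt H n (2 * x + bz H a) (2 * y + bz H a') b b' := by
  unfold cnt
  rw [Fin.sum_univ_succ]
  simp only [dwalk_cons]
  rfl

lemma sum_cons (n : ℕ) (f : (Fin (n+1) → Bool) → ℝ) :
    ∑ b, f b = ∑ a : Bool, ∑ b : Fin n → Bool, f (Fin.cons a b : Fin (n+1) → Bool) := by
  rw [← (Fin.consEquiv (fun _ : Fin (n+1) => Bool)).sum_comp, Fintype.sum_prod_type]
  rfl

noncomputable def avg (H : ℕ) (f : ZMod H → ZMod H → ℝ) (x y : ZMod H) : ℝ :=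
  (∑ a : Bool, ∑ a' : Bool, f (2 * x + bz H a) (2 * y + bz H a')) / 4

lemma avg_mono (H : ℕ) (f g : ZMod H → ZMod H → ℝ) (h : ∀ x y, f x y ≤ g x y) (x y : ZMod H) :
    avg H f x y ≤ avg H g x y := by
  unfold avg
  gcongr
  exact h _ _

noncomputable def vv (H : ℕ) : ℕ → ZMod H → ZMod H → ℝ
  | 0 => fun _ _ => 0
  | n + 1 => avg H (fun x y => (if x = y then 1 else 0) + vv H n x y)

noncomputable def ff (H : ℕ) : ℕ → ZMod H → ZMod H → ℝ
  | 0 => fun _ _ => 0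
  | n + 1 => avg H (fun x y => if x = y then 1 else ff H n x y)

noncomputable def pp (H : ℕ) : ℕ → ZMod H → ZMod H → ℝ
  | 0 => fun x y => if x = y then 1 else 0
  | n + 1 => avg H (pp H n)

lemma sum_vv (H n : ℕ) (x y : ZMod H) :
    ∑ b, ∑ b', (cnt H n x y b b' : ℝ) = 4 ^ n * vv H n x y := by
  induction n generalizing x y with
  | zero => simp [cnt, vv]
  | succ n ih =>
    rw [sum_cons]
    simp only [sum_cons, cnt_cons, vv, avg]
    have : ∀ a : Bool, ∑ b : Fin n → Bool, ∑ a' : Bool, ∑ b' : Fin n → Bool,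
        (((if 2 * x + bz H a = 2 * y + bz H a' then 1 else 0)
        + cnt H n (2 * x + bz H a) (2 * y + bz H a') b b' : ℕ) : ℝ) =
        ∑ a' : Bool, 4 ^ n * ((if 2 * x + bz H a = 2 * y + bz H a' then 1 else 0)
          + vv H n (2 * x + bz H a) (2 * y + bz H a')) := by
      intro a
      rw [Finset.sum_comm]
      refine Finset.sum_congr rfl fun a' _ => ?_
      rw [mul_add, ← ih]
      push_cast
      simp only [Finset.sum_add_distrib, Finset.sum_const, Finset.card_univ, Fintype.card_fun,
        Fintype.card_bool, Fintype.card_fin, nsmul_eq_mul]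
      push_cast
      rw [show (4:ℝ) = 2 * 2 by norm_num, mul_pow]
      ring
    simp only [this, ← Finset.mul_sum]
    ring

lemma sum_ff (H n : ℕ) (x y : ZMod H) :
    ∑ b, ∑ b', (if 0 < cnt H n x y b b' then (1:ℝ) else 0) = 4 ^ n * ff H n x y := by
  induction n generalizing x y with
  | zero => simp [cnt, ff]
  | succ n ih =>
    rw [sum_cons]
    simp only [sum_cons, cnt_cons, ff, avg]
    have : ∀ a : Bool, ∑ b : Fin n → Bool, ∑ a' : Bool, ∑ b' : Fin n → Bool,
        (if 0 < (if 2 * x + bz H a = 2 * y + bz H a' then 1 else 0)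
        + cnt H n (2 * x + bz H a) (2 * y + bz H a') b b' then (1:ℝ) else 0) =
        ∑ a' : Bool, 4 ^ n * (if 2 * x + bz H a = 2 * y + bz H a' then 1 else
          ff H n (2 * x + bz H a) (2 * y + bz H a')) := by
      intro a
      rw [Finset.sum_comm]
      refine Finset.sum_congr rfl fun a' _ => ?_
      by_cases h : 2 * x + bz H a = 2 * y + bz H a'
      · simp only [if_pos h]
        simp only [Nat.zero_lt_succ, Nat.add_pos_left, if_true,
          Finset.sum_const, Finset.card_univ, Fintype.card_fun,
          Fintype.card_bool, Fintype.card_fin, nsmul_eq_mul]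
        push_cast
        rw [show (4:ℝ) = 2 * 2 by norm_num, mul_pow]
        ring
      · simp only [if_neg h, zero_add, ih]
    simp only [this, ← Finset.mul_sum]
    ring

lemma vv_le (H m : ℕ) (c : ℝ) (hc : ∀ n < m, ∀ x, 1 + vv H n x x ≤ c) (n : ℕ) (hn : n ≤ m)
    (x y : ZMod H) : vv H n x y ≤ c * ff H n x y := by
  induction n generalizing x y with
  | zero => simp [vv, ff]
  | succ n ih =>
    have : c * ff H (n+1) x y = avg H (fun x y => c * (if x = y then 1 else ff H n x y)) x y := by
      simp only [ff, avg, ← Finset.mul_sum]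
      ring
    rw [this, vv]
    apply avg_mono
    intro x y
    by_cases h : x = y
    · subst h
      simpa using hc n (by omega) x
    · simpa [h] using ih (by omega) x y

lemma vv_eq (H n : ℕ) (x y : ZMod H) :
    vv H n x y = ∑ k ∈ Finset.range n, pp H (k+1) x y := by
  induction n generalizing x y with
  | zero => simp [vv]
  | succ n ih =>
    rw [vv, Finset.sum_range_succ', avg]
    simp only [ih]
    simp only [pp, avg, Finset.sum_add_distrib, ← Finset.sum_div]
    rw [add_div, add_comm]
    congr 2
    simp only [Fintype.sum_bool, Finset.sum_add_distrib]

lemma range_bool (k : ℕ) (f : ℕ → ℝ) :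
    ∑ m ∈ Finset.range (2^(k+1)), f m
      = ∑ a : Bool, ∑ m ∈ Finset.range (2^k), f ((if a then 2^k else 0) + m) := by
  rw [pow_succ, mul_two, Finset.sum_range_add]
  simp [add_comm]

lemma pp_eq (H k : ℕ) (x y : ZMod H) :
    4 ^ k * pp H k x y = ∑ m ∈ Finset.range (2^k), ∑ m' ∈ Finset.range (2^k),
      if 2^k * x + m = 2^k * y + m' then (1:ℝ) else 0 := by
  induction k generalizing x y with
  | zero => simp only [pp, pow_zero, Finset.sum_range_one, Nat.cast_zero, add_zero, one_mul]
  | succ k ih =>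
    have h1 : (4:ℝ)^(k+1) * pp H (k+1) x y
      = ∑ a : Bool, ∑ a' : Bool, 4^k * pp H k (2 * x + bz H a) (2 * y + bz H a') := by
      simp only [pp, avg, ← Finset.mul_sum]
      ring
    rw [h1, range_bool]
    refine Finset.sum_congr rfl fun a _ => ?_
    simp only [range_bool]
    rw [Finset.sum_comm]
    refine Finset.sum_congr rfl fun a' _ => ?_
    rw [ih]
    have key : ∀ (x : ZMod H) (a : Bool) (m : ℕ), 2^k * (2 * x + bz H a) + (m : ZMod H)
        = 2^(k+1) * x + (((if a then 2^k else 0) + m : ℕ) : ZMod H) := by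
      intro x a m
      cases a <;> simp [bz] <;> ring
    simp only [key]

lemma pp_le_small (d k : ℕ) (hk : k ≤ d) (x y : ZMod (2^d)) :
    pp (2^d) k x y ≤ (1/2)^k := by
  have h := pp_eq (2^d) k x y
  have h2 : ∑ m ∈ Finset.range (2^k), ∑ m' ∈ Finset.range (2^k),
      (if 2^k * x + m = 2^k * y + m' then (1:ℝ) else 0) ≤ ∑ m ∈ Finset.range (2^k), 1 := by
    refine Finset.sum_le_sum fun m _ => ?_
    rw [← Finset.sum_filter, Finset.sum_const, nsmul_eq_mul, mul_one]
    have : (Finset.filter (fun m' : ℕ => 2^k * x + (m : ZMod (2^d)) = 2^k * y + m')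
        (Finset.range (2^k))).card ≤ 1 := by
      rw [Finset.card_le_one]
      intro u hu w hw
      simp only [Finset.mem_filter, Finset.mem_range] at hu hw
      have e : (u : ZMod (2^d)) = w := add_left_cancel (hu.2.symm.trans hw.2)
      rw [ZMod.natCast_eq_natCast_iff] at e
      have hp : 2^k ≤ 2^d := Nat.pow_le_pow_right (by norm_num) hk
      exact Nat.ModEq.eq_of_lt_of_lt e (by omega) (by omega)
    exact_mod_cast this
  rw [← h] at h2
  simp only [Finset.sum_const, Finset.card_range, nsmul_eq_mul, mul_one] at h2
  push_cast at h2
  have h4 : (0:ℝ) < 4^k := by positivity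
  have : (2:ℝ)^k = 4^k * (1/2)^k := by rw [← mul_pow]; norm_num
  rw [this] at h2
  exact le_of_mul_le_mul_left h2 h4

lemma pp_le_large (d k : ℕ) (x y : ZMod (2^d)) :
    pp (2^d) (d + k) x y ≤ (1/2)^d := by
  induction k generalizing x y with
  | zero => exact pp_le_small d d le_rfl x y
  | succ k ih =>
    refine (avg_mono _ _ (fun _ _ => (1/2)^d) ih x y).trans ?_
    simp [avg]
    apply le_of_eq
    ring

lemma pp_le (d k : ℕ) (x y : ZMod (2^d)) :
    pp (2^d) k x y ≤ (1/2)^k + (1/2)^d := by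
  rcases le_total k d with h | h
  · have := pp_le_small d k h x y
    have : (0:ℝ) ≤ (1/2)^d := by positivity
    linarith
  · obtain ⟨j, rfl⟩ := Nat.exists_eq_add_of_le h
    have := pp_le_large d j x y
    have : (0:ℝ) ≤ (1/2)^(d+j) := by positivity
    linarith

lemma vv_bound (d n : ℕ) (x y : ZMod (2^d)) :
    vv (2^d) n x y ≤ 1 - (1/2)^n + n * (1/2)^d := by
  rw [vv_eq]
  induction n with
  | zero => simp
  | succ n ih =>
    rw [Finset.sum_range_succ]
    have := pp_le d (n+1) x y
    push_cast
    have e : (1/2:ℝ)^(n+1) = (1/2)^n / 2 := by ring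
    rw [e] at this
    rw [e]
    linarith

lemma range_zmod (H : ℕ) [NeZero H] (f : ZMod H → ℝ) :
    ∑ x, f x = ∑ m ∈ Finset.range H, f m := by
  symm
  refine Finset.sum_bij' (fun m _ => (m : ZMod H)) (fun x _ => x.val) ?_ ?_ ?_ ?_ ?_
  · simp
  · intro x _; simpa using ZMod.val_lt x
  · intro m hm; exact ZMod.val_cast_of_lt (by simpa using hm)
  · simp
  · simp

lemma sum_even_odd (n : ℕ) (f : ℕ → ℝ) :
    ∑ m ∈ Finset.range n, (f (2*m+1) + f (2*m)) = ∑ m ∈ Finset.range (2*n), f m := by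
  induction n with
  | zero => simp
  | succ n ih =>
    rw [Finset.sum_range_succ, ih, show 2*(n+1) = 2*n+1+1 by ring, Finset.sum_range_succ,
      Finset.sum_range_succ]
    ring

lemma stat (H : ℕ) [NeZero H] (f : ZMod H → ℝ) :
    ∑ x, ∑ a : Bool, f (2 * x + bz H a) = 2 * ∑ x, f x := by
  rw [range_zmod, range_zmod H f]
  have := sum_even_odd H (fun m => f m)
  simp only [Fintype.sum_bool, bz]
  push_cast at this
  simp only [if_true, Bool.false_eq_true, if_false, add_zero]
  rw [this, two_mul, Finset.sum_range_add]
  simp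
  ring

lemma stat2 (H : ℕ) [NeZero H] (f : ZMod H → ZMod H → ℝ) :
    ∑ x, ∑ y, avg H f x y = ∑ x, ∑ y, f x y := by
  simp only [avg, ← Finset.sum_div]
  have : ∑ x, ∑ y, ∑ a : Bool, ∑ a' : Bool, f (2 * x + bz H a) (2 * y + bz H a')
      = 4 * ∑ x, ∑ y, f x y := by
    have h1 : ∀ x, ∑ y, ∑ a : Bool, ∑ a' : Bool, f (2 * x + bz H a) (2 * y + bz H a')
        = ∑ a : Bool, 2 * ∑ y, f (2 * x + bz H a) y := by
      intro x
      rw [Finset.sum_comm]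
      refine Finset.sum_congr rfl fun a _ => ?_
      exact stat H (f (2 * x + bz H a))
    simp only [h1]
    rw [stat H (fun x => 2 * ∑ y, f x y), ← Finset.mul_sum]
    ring
  rw [this]
  ring

lemma tot_vv (H n : ℕ) [NeZero H] : ∑ x, ∑ y, vv H n x y = n * H := by
  induction n with
  | zero => simp [vv]
  | succ n ih =>
    simp only [vv]
    rw [stat2]
    simp only [Finset.sum_add_distrib, ih]
    simp [ZMod.card]
    ring

/-- Fix `d ≥ 1`, `H = 2^d` and `s ≥ 1`.  For two doubling
walks on `ℤ/Hℤ` with independent uniform starting points and independent uniform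
driving bits, let `N` be the number of times `t ∈ {1,…,s}` at which the two
walks collide.  Then `E[N] = s/H`, `E[N | N > 0] < 2 + s/H` and consequently
`Pr[N > 0] > s/(2H + s)`. -/
theorem statement10 (d : ℕ) (hd : 1 ≤ d) (H s : ℕ) (hH : H = 2 ^ d)
    (hs : 1 ≤ s) [NeZero H]
    (N : ZMod H × ZMod H × (Fin s → Bool) × (Fin s → Bool) → ℕ)
    (hN : ∀ ω, N ω = Nat.card {t : Fin s //
        dwalk H ω.1 (extBits ω.2.2.1) (t.1 + 1)
          = dwalk H ω.2.1 (extBits ω.2.2.2) (t.1 + 1)}) :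
    (∑ ω : ZMod H × ZMod H × (Fin s → Bool) × (Fin s → Bool), (N ω : ℝ))
        / Fintype.card (ZMod H × ZMod H × (Fin s → Bool) × (Fin s → Bool))
      = s / H
    ∧ (∑ ω : ZMod H × ZMod H × (Fin s → Bool) × (Fin s → Bool), (N ω : ℝ))
        < (2 + s / H) *
          Nat.card {ω : ZMod H × ZMod H × (Fin s → Bool) × (Fin s → Bool) //
            0 < N ω}
    ∧ (Nat.card {ω : ZMod H × ZMod H × (Fin s → Bool) × (Fin s → Bool) //
          0 < N ω} : ℝ)
        / Fintype.card (ZMod H × ZMod H × (Fin s → Bool) × (Fin s → Bool))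
      > s / (2 * H + s) := by
  have hcnt : ∀ ω, N ω = cnt H s ω.1 ω.2.1 ω.2.2.1 ω.2.2.2 := by
    intro ω
    rw [hN, Nat.card_eq_fintype_card, Fintype.card_subtype, Finset.card_filter]
    rfl
  have hS : (∑ ω : ZMod H × ZMod H × (Fin s → Bool) × (Fin s → Bool), (N ω : ℝ))
      = 4 ^ s * (s * H) := by
    simp only [hcnt, Fintype.sum_prod_type, sum_vv, ← Finset.mul_sum, tot_vv]
  have hF : (Nat.card {ω : ZMod H × ZMod H × (Fin s → Bool) × (Fin s → Bool) //
            0 < N ω} : ℝ) = 4 ^ s * ∑ x, ∑ y, ff H s x y := by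
    rw [Nat.card_eq_fintype_card, Fintype.card_subtype, Finset.card_filter]
    push_cast
    simp only [hcnt, Fintype.sum_prod_type, sum_ff, ← Finset.mul_sum]
  have hC : (Fintype.card (ZMod H × ZMod H × (Fin s → Bool) × (Fin s → Bool)) : ℝ)
      = 4 ^ s * (H * H) := by
    simp only [Fintype.card_prod, ZMod.card, Fintype.card_fun, Fintype.card_bool, Fintype.card_fin]
    push_cast
    rw [show (4:ℝ) = 2 * 2 by norm_num, mul_pow]
    ring
  have hHpos : (0:ℝ) < H := by exact_mod_cast Nat.pos_of_ne_zero (NeZero.ne H)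
  have hspos : (0:ℝ) < s := by exact_mod_cast hs
  have h4 : (0:ℝ) < 4 ^ s := by positivity
  rw [hS, hF, hC]
  set P := ∑ x, ∑ y, ff H s x y with hP
  have hle : (s:ℝ) * H ≤ (2 + (s - 1) / H) * P := by
    rw [← tot_vv, hP]
    simp only [Finset.mul_sum]
    refine Finset.sum_le_sum fun x _ => Finset.sum_le_sum fun y _ => ?_
    refine vv_le H s _ ?_ s le_rfl x y
    intro n hn x
    subst hH
    have hb := vv_bound d n x x
    have h5 : (0:ℝ) ≤ (1/2)^n := by positivity
    have h6 : (n:ℝ) ≤ s - 1 := by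
      have : (n:ℝ) + 1 ≤ s := by exact_mod_cast hn
      linarith
    have h7 : (n:ℝ) * (1/2)^d ≤ (s-1) / ((2^d : ℕ) : ℝ) := by
      push_cast
      rw [one_div, inv_pow, div_eq_mul_inv]
      gcongr
    linarith
  have hcpos : (0:ℝ) < 2 + (s - 1) / H := by
    have : (1:ℝ) ≤ s := by exact_mod_cast hs
    have : (0:ℝ) ≤ (s - 1) / H := div_nonneg (by linarith) hHpos.le
    linarith
  have hPpos : 0 < P := by
    have : 0 < (2 + ((s:ℝ) - 1) / H) * P := lt_of_lt_of_le (by positivity) hle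
    exact (mul_pos_iff_of_pos_left hcpos).mp this
  have hlt : (s:ℝ) * H < (2 + s / H) * P := by
    refine hle.trans_lt ?_
    gcongr
    linarith
  refine ⟨by field_simp, ?_, ?_⟩
  · calc (4:ℝ)^s * (s * H) < 4^s * ((2 + s / H) * P) := by gcongr
      _ = _ := by ring
  · rw [gt_iff_lt, mul_div_mul_left _ _ h4.ne', div_lt_div_iff₀ (by positivity) (by positivity)]
    have : (2 + (s:ℝ) / H) * P * H = P * (2 * H + s) := by field_simp
    rw [← this]
    have := mul_lt_mul_of_pos_right hlt hHpos
    linarith
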